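/- arXiv:2311.01082 — 9 statements merged into one kernel-verified Lean document; each statement's English description precedes it below -/
import Mathlib

section
/- For every integer r ≥ 3, the family 𝓕(P_r) of all finite simple graphs containing no induced copy of the path P_r with r edges (and r+1 vertices) is feasible. -/
/-- Colex position of the pair `{u, v}`. -/
def colexCode (u v : ℕ) : ℕ := (max u v).choose 2 + min u v

theorem colexCode_comm (u v : ℕ) : colexCode u v = colexCode v u := by
  simp [colexCode, max_comm, min_comm]

theorem colexCode_of_lt {u v : ℕ} (h : u < v) : colexCode u v = v.choose 2 + u := by
  simp [colexCode, max_eq_right h.le, min_eq_left h.le]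

theorem choose_two_step (v : ℕ) : (v + 1).choose 2 = v.choose 2 + v := by
  rw [Nat.choose_succ_succ' v 1, Nat.choose_one_right, add_comm]

theorem choose_two_gap {v w : ℕ} (h : v < w) : v.choose 2 + v ≤ w.choose 2 := by
  rw [← choose_two_step]
  exact Nat.choose_le_choose 2 h

theorem colexCode_mono {u u' w : ℕ} (h : u < u') (h1 : w ≠ u) (h2 : w ≠ u') :
    colexCode u w ≤ colexCode u' w := by
  rcases lt_or_gt_of_ne h1 with h1 | h1
  · rw [colexCode_comm u, colexCode_comm u', colexCode_of_lt h1, colexCode_of_lt (h1.trans h)]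
    have := choose_two_gap h
    omega
  · rw [colexCode_of_lt h1]
    rcases lt_or_gt_of_ne h2 with h2 | h2
    · rw [colexCode_comm u', colexCode_of_lt h2]
      have := choose_two_gap h2
      omega
    · rw [colexCode_of_lt h2]
      omega

theorem colexCode_inj {u v u' v' : ℕ} (h : u < v) (h' : u' < v')
    (he : colexCode u v = colexCode u' v') : u = u' ∧ v = v' := by
  rw [colexCode_of_lt h, colexCode_of_lt h'] at he
  rcases lt_trichotomy v v' with hv | hv | hv
  · have := choose_two_gap hv
    omega
  · subst hv
    omega
  · have := choose_two_gap hv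
    omega

theorem exists_colexCode (n m : ℕ) (h : m < n.choose 2) :
    ∃ u v, u < v ∧ v < n ∧ colexCode u v = m := by
  induction n with
  | zero => simp at h
  | succ n ih =>
    by_cases hm : m < n.choose 2
    · obtain ⟨u, v, h1, h2, h3⟩ := ih hm
      exact ⟨u, v, h1, by omega, h3⟩
    · rw [choose_two_step] at h
      refine ⟨m - n.choose 2, n, by omega, by omega, ?_⟩
      rw [colexCode_of_lt (by omega)]
      omega

/-- The graph whose edges are the first `m` pairs in colex order. -/
def colexGraph (n m : ℕ) : SimpleGraph (Fin n) where
  Adj u v := u ≠ v ∧ colexCode u v < m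
  symm := ⟨fun u v h => ⟨h.1.symm, by rw [colexCode_comm]; exact h.2⟩⟩
  loopless := ⟨fun _ h => h.1 rfl⟩

theorem colexGraph_ncard (n m : ℕ) (h : m ≤ n.choose 2) :
    (colexGraph n m).edgeSet.ncard = m := by
  induction m with
  | zero =>
    have : (colexGraph n 0).edgeSet = ∅ := by
      ext e
      induction e with | _ a b => simp [colexGraph]
    simp [this]
  | succ m ih =>
    obtain ⟨u, v, huv, hv, hc⟩ := exists_colexCode n m h
    have hins : (colexGraph n (m + 1)).edgeSet =
        insert s((⟨u, huv.trans hv⟩ : Fin n), (⟨v, hv⟩ : Fin n)) (colexGraph n m).edgeSet := by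
      ext e
      induction e with | _ a b =>
      simp only [SimpleGraph.mem_edgeSet, Set.mem_insert_iff, Sym2.eq_iff, colexGraph, Fin.ext_iff,
        ne_eq]
      constructor
      · rintro ⟨h1, h2⟩
        by_cases hm : colexCode a b = m
        · left
          rcases lt_or_gt_of_ne h1 with h3 | h3
          · exact Or.inl (colexCode_inj h3 huv (hm.trans hc.symm))
          · rw [colexCode_comm] at hm
            exact Or.inr (colexCode_inj h3 huv (hm.trans hc.symm)).symm
        · exact Or.inr ⟨h1, by omega⟩
      · rintro ((⟨h1, h2⟩ | ⟨h1, h2⟩) | ⟨h1, h2⟩)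
        · rw [h1, h2]
          exact ⟨by omega, by omega⟩
        · rw [h1, h2, colexCode_comm]
          exact ⟨by omega, by omega⟩
        · exact ⟨h1, by omega⟩
    rw [hins, Set.ncard_insert_of_notMem _ (Set.toFinite _), ih (by omega)]
    simp [colexGraph, hc]

theorem colexGraph_adj_of_lt {n m : ℕ} {u u' w : Fin n} (h : u < u') (hw : w ≠ u)
    (ha : (colexGraph n m).Adj u' w) : (colexGraph n m).Adj u w :=
  ⟨hw.symm, lt_of_le_of_lt (colexCode_mono h (Fin.val_ne_of_ne hw)
    (Fin.val_ne_of_ne ha.1.symm)) ha.2⟩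


open SimpleGraph

/-- `(n, m)` is a feasible pair for a family `F` of finite simple graphs
(given, for each number of vertices `n`, as a predicate on simple graphs on `Fin n`):
some member of the family has exactly `n` vertices and exactly `m` edges. -/
def FeasiblePair (F : ∀ n : ℕ, SimpleGraph (Fin n) → Prop) (n m : ℕ) : Prop :=
  ∃ G : SimpleGraph (Fin n), F n G ∧ G.edgeSet.ncard = m

/-- A family of finite simple graphs is feasible if every pair `(n, m)` with
`n ≥ 1` and `0 ≤ m ≤ n(n-1)/2` is feasible for it. -/
def Feasible (F : ∀ n : ℕ, SimpleGraph (Fin n) → Prop) : Prop :=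
  ∀ n m : ℕ, 1 ≤ n → m ≤ n * (n - 1) / 2 → FeasiblePair F n m

/-- `G` is contained in `H` as an induced subgraph: there is an injective map of the
vertices of `G` into the vertices of `H` under which adjacency in `H` holds
if and only if it holds in `G`. -/
def IndContains {α β : Type*} (G : SimpleGraph α) (H : SimpleGraph β) : Prop :=
  ∃ f : α ↪ β, ∀ a b : α, H.Adj (f a) (f b) ↔ G.Adj a b

/-- The family `𝓕(G)` of all induced `G`-free finite simple graphs. -/
def IndFreeFamily {α : Type*} (G : SimpleGraph α) :
    ∀ n : ℕ, SimpleGraph (Fin n) → Prop :=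
  fun _ H => ¬ IndContains G H

/-- For every `r ≥ 3`, the family of all graphs with no induced copy of the path `P_r`
with `r` edges (i.e. `r + 1` vertices) is feasible. -/
theorem feasible_indFreeFamily_path (r : ℕ) (hr : 3 ≤ r) :
    Feasible (IndFreeFamily (SimpleGraph.pathGraph (r + 1))) := by
  intro n m _ hm
  refine ⟨colexGraph n m, ?_, colexGraph_ncard n m (by rwa [Nat.choose_two_right])⟩
  rintro ⟨f, hf⟩
  let a : Fin (r + 1) := ⟨0, by omega⟩
  let b : Fin (r + 1) := ⟨1, by omega⟩
  let c : Fin (r + 1) := ⟨2, by omega⟩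
  let d : Fin (r + 1) := ⟨3, by omega⟩
  have hba : (colexGraph n m).Adj (f b) (f a) := by
    rw [hf, SimpleGraph.pathGraph_adj]; simp [a, b]
  have hcd : (colexGraph n m).Adj (f c) (f d) := by
    rw [hf, SimpleGraph.pathGraph_adj]; simp [c, d]
  have hca : ¬ (colexGraph n m).Adj (f c) (f a) := by
    rw [hf, SimpleGraph.pathGraph_adj]; simp [c, a]
  have hbd : ¬ (colexGraph n m).Adj (f b) (f d) := by
    rw [hf, SimpleGraph.pathGraph_adj]; simp [b, d]
  have hbc : f b ≠ f c := f.injective.ne (by simp [b, c])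
  have hac : f a ≠ f c := f.injective.ne (by simp [a, c])
  have hdb : f d ≠ f b := f.injective.ne (by simp [b, d])
  rcases lt_or_gt_of_ne hbc with h | h
  · exact hbd (colexGraph_adj_of_lt h hdb hcd)
  · exact hca (colexGraph_adj_of_lt h hac hba)
end

section
/- For nonnegative integers p and r with p + r ≥ 2, the family 𝓕(H(p,0,r)) of all induced H(p,0,r)-free graphs is feasible if and only if p ≥ 3 and r ≥ 1. In particular, 𝓕(H(p,0,r)) is not feasible when p = 0 or r = 0, and not feasible when p ∈ {1,2} and r ≥ 1. -/
open SimpleGraph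

/-- The graph `H(p,q,r) = (K_p ∖ K_{1,q}) ∪ rK_1`: the complete graph on the `p`
left-hand vertices, from which the `q` edges joining the vertex `0` to the vertices
`1, …, q` have been removed, together with `r` isolated right-hand vertices. -/
def Hgraph (p q r : ℕ) : SimpleGraph (Fin p ⊕ Fin r) :=
  SimpleGraph.fromRel (fun a b =>
    ∃ i j : Fin p, a = Sum.inl i ∧ b = Sum.inl j ∧
      ¬ ((i.val = 0 ∧ 1 ≤ j.val ∧ j.val ≤ q) ∨ (j.val = 0 ∧ 1 ≤ i.val ∧ i.val ≤ q)))

/-- Code of an unordered pair, colexicographic. -/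
def pairCode {n : ℕ} (a b : Fin n) : ℕ := n * max a.val b.val + min a.val b.val

lemma pairCode_comm {n : ℕ} (a b : Fin n) : pairCode a b = pairCode b a := by
  simp [pairCode, max_comm, min_comm]

lemma pairCode_lt {n : ℕ} {a b c d : Fin n} (h : max a.val b.val < max c.val d.val) :
    pairCode a b < pairCode c d := by
  unfold pairCode
  have h1 : min a.val b.val < n := lt_of_le_of_lt (min_le_left _ _) a.isLt
  nlinarith [Nat.zero_le (min c.val d.val)]

lemma pairCode_inj {n : ℕ} {a b c d : Fin n} (h : pairCode a b = pairCode c d) :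
    s(a, b) = s(c, d) := by
  have h1 : max a.val b.val = max c.val d.val := by
    rcases lt_trichotomy (max a.val b.val) (max c.val d.val) with h1 | h1 | h1
    · have := pairCode_lt h1; omega
    · exact h1
    · have := pairCode_lt h1; omega
  have h2 : min a.val b.val = min c.val d.val := by
    unfold pairCode at h
    rw [h1] at h
    omega
  rw [Sym2.eq_iff]
  simp only [Fin.ext_iff]
  omega

/-- The graph whose edges are the pairs of code at least `t`. -/
def tailGraph (n t : ℕ) : SimpleGraph (Fin n) where
  Adj a b := a ≠ b ∧ t ≤ pairCode a b
  symm := ⟨fun a b h => ⟨h.1.symm, by rw [pairCode_comm]; exact h.2⟩⟩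
  loopless := ⟨fun _ h => h.1 rfl⟩

lemma tailGraph_step (n t : ℕ) :
    (tailGraph n t).edgeSet.ncard ≤ (tailGraph n (t+1)).edgeSet.ncard + 1 := by
  by_cases hx : ∃ a b : Fin n, pairCode a b = t
  · obtain ⟨a, b, hab⟩ := hx
    have hs : (tailGraph n t).edgeSet ⊆ insert s(a, b) (tailGraph n (t+1)).edgeSet := by
      intro e
      induction e using Sym2.ind with
      | _ c d =>
        intro he
        have he' : c ≠ d ∧ t ≤ pairCode c d := he
        rcases Nat.eq_or_lt_of_le he'.2 with h | h
        · left
          exact pairCode_inj (by omega)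
        · right
          exact (show c ≠ d ∧ t + 1 ≤ pairCode c d from ⟨he'.1, h⟩)
    exact (Set.ncard_le_ncard hs (Set.toFinite _)).trans (Set.ncard_insert_le _ _)
  · have hs : (tailGraph n t).edgeSet ⊆ (tailGraph n (t+1)).edgeSet := by
      intro e
      induction e using Sym2.ind with
      | _ c d =>
        intro he
        have he' : c ≠ d ∧ t ≤ pairCode c d := he
        rcases Nat.eq_or_lt_of_le he'.2 with h | h
        · exact absurd ⟨c, d, h.symm⟩ hx
        · exact (show c ≠ d ∧ t + 1 ≤ pairCode c d from ⟨he'.1, h⟩)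
    exact (Set.ncard_le_ncard hs (Set.toFinite _)).trans (Nat.le_succ _)

lemma ncard_edgeSet_top (n : ℕ) :
    (⊤ : SimpleGraph (Fin n)).edgeSet.ncard = n * (n - 1) / 2 := by
  classical
  rw [← SimpleGraph.coe_edgeFinset, Set.ncard_coe_finset, SimpleGraph.card_edgeFinset_top_eq_card_choose_two,
    Fintype.card_fin, Nat.choose_two_right]

lemma tailGraph_zero (n : ℕ) : tailGraph n 0 = ⊤ := by
  ext a b
  simp [tailGraph]

lemma tailGraph_last (n : ℕ) : tailGraph n (n * n) = ⊥ := by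
  ext a b
  simp only [tailGraph, SimpleGraph.bot_adj, iff_false, not_and, not_le]
  intro _
  unfold pairCode
  have h1 : min a.val b.val < n := lt_of_le_of_lt (min_le_left _ _) a.isLt
  have h2 : max a.val b.val < n := max_lt a.isLt b.isLt
  nlinarith

lemma exists_tailGraph (n m : ℕ) (hm : m ≤ n * (n - 1) / 2) :
    ∃ t, (tailGraph n t).edgeSet.ncard = m := by
  by_contra hne
  push Not at hne
  have key : ∀ t, m < (tailGraph n t).edgeSet.ncard := by
    intro t
    induction t with
    | zero =>
      have h0 := hne 0
      rw [tailGraph_zero, ncard_edgeSet_top] at h0 ⊢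
      omega
    | succ t ih =>
      have h1 := tailGraph_step n t
      have h2 := hne (t+1)
      omega
  have := key (n * n)
  rw [tailGraph_last] at this
  simp at this

lemma tailGraph_aux {n t : ℕ} {a b c x : Fin n} (hab : a < b) (hbc : b < c)
    (h : (tailGraph n t).Adj a b) (hxc : x ≠ c) (hx : ¬ (tailGraph n t).Adj x c) : False := by
  have h1 : t ≤ pairCode a b := h.2
  have h2 : ¬ t ≤ pairCode x c := fun h => hx ⟨hxc, h⟩
  have h3 : pairCode a b < pairCode x c := by
    apply pairCode_lt
    have : a.val < b.val := hab
    have : b.val < c.val := hbc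
    omega
  omega

lemma tailGraph_free {n t : ℕ} {a b c x : Fin n}
    (hab : (tailGraph n t).Adj a b) (hbc : (tailGraph n t).Adj b c) (hac : (tailGraph n t).Adj a c)
    (ha : x ≠ a) (hb : x ≠ b) (hc : x ≠ c)
    (hxa : ¬ (tailGraph n t).Adj x a) (hxb : ¬ (tailGraph n t).Adj x b)
    (hxc : ¬ (tailGraph n t).Adj x c) : False := by
  rcases lt_or_gt_of_ne hab.1 with h1 | h1 <;> rcases lt_or_gt_of_ne hbc.1 with h2 | h2 <;>
    rcases lt_or_gt_of_ne hac.1 with h3 | h3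
  · exact tailGraph_aux h1 h2 hab hc hxc
  · exact absurd (h1.trans h2) (lt_asymm h3)
  · exact tailGraph_aux h3 h2 hac hb hxb
  · exact tailGraph_aux h3 h1 hac.symm hb hxb
  · exact tailGraph_aux h1 h3 hab.symm hc hxc
  · exact tailGraph_aux h2 h3 hbc ha hxa
  · exact absurd (h2.trans h1) (lt_asymm h3)
  · exact tailGraph_aux h2 h1 hbc.symm ha hxa

lemma Hgraph_zero_adj {p r : ℕ} (a b : Fin p ⊕ Fin r) :
    (Hgraph p 0 r).Adj a b ↔ a ≠ b ∧ a.isLeft ∧ b.isLeft := by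
  unfold Hgraph
  rw [SimpleGraph.fromRel_adj]
  refine and_congr_right fun _ => ?_
  constructor
  · rintro (⟨i, j, rfl, rfl, -⟩ | ⟨i, j, rfl, rfl, -⟩) <;> simp
  · rcases a with i | i <;> rcases b with j | j <;> simp
    omega

lemma exists_equiv_pair {α : Type*} {n : ℕ} (e : α ≃ Fin n) (a b : α) (hab : a ≠ b)
    (u v : Fin n) (huv : u ≠ v) : ∃ f : α ≃ Fin n, f a = u ∧ f b = v := by
  let s₁ := e.trans (Equiv.swap (e a) u)
  have h1 : s₁ a = u := by simp [s₁]
  have h2 : s₁ b ≠ u := fun h => hab (s₁.injective (h1.trans h.symm))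
  refine ⟨s₁.trans (Equiv.swap (s₁ b) v), ?_, by simp⟩
  simp only [Equiv.trans_apply, h1]
  exact Equiv.swap_apply_of_ne_of_ne h2.symm huv

/-- For `p + r ≥ 2`, the family `𝓕(H(p,0,r))` of all graphs with no induced copy of
`K_p ∪ rK_1` is feasible if and only if `p ≥ 3` and `r ≥ 1`; in particular it is not
feasible when `p = 0` or `r = 0`, nor when `p ∈ {1, 2}` and `r ≥ 1`. -/
theorem feasible_indFreeFamily_Hp0r_iff (p r : ℕ) (hpr : 2 ≤ p + r) :
    Feasible (IndFreeFamily (Hgraph p 0 r)) ↔ (3 ≤ p ∧ 1 ≤ r) := by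
  constructor
  · intro hF
    by_contra hcon
    have hcases : p ≤ 1 ∨ r = 0 ∨ (p = 2 ∧ 1 ≤ r) := by omega
    rcases hcases with hp | rfl | ⟨rfl, hr⟩
    · obtain ⟨G, hG, hm⟩ := hF (p + r) 0 (by omega) (Nat.zero_le _)
      apply hG
      rw [Set.ncard_eq_zero (Set.toFinite _), SimpleGraph.edgeSet_eq_empty] at hm
      subst hm
      refine ⟨finSumFinEquiv.toEmbedding, fun a b => ?_⟩
      rw [Hgraph_zero_adj]
      simp only [SimpleGraph.bot_adj, false_iff]
      rintro ⟨hne, ha, hb⟩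
      rcases a with i | i <;> rcases b with j | j <;> simp at ha hb hne
      omega
    · obtain ⟨G, hG, hm⟩ := hF (p + 0) _ (by omega) le_rfl
      apply hG
      have hGt : G = ⊤ := by
        rw [← ncard_edgeSet_top] at hm
        apply SimpleGraph.edgeSet_injective
        apply Set.eq_of_subset_of_ncard_le (SimpleGraph.edgeSet_mono le_top) hm.ge (Set.toFinite _)
      subst hGt
      refine ⟨finSumFinEquiv.toEmbedding, fun a b => ?_⟩
      rw [Hgraph_zero_adj]
      rcases a with i | i
      · rcases b with j | j
        · simp [Fin.ext_iff]
        · exact j.elim0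
      · exact i.elim0
    · obtain ⟨G, hG, hm⟩ := hF (2 + r) 1 (by omega) (by
        rw [Nat.le_div_iff_mul_le (by norm_num)]
        have : 2 + r - 1 = r + 1 := by omega
        rw [this]
        nlinarith)
      apply hG
      obtain ⟨e, he⟩ := Set.ncard_eq_one.mp hm
      induction e using Sym2.ind with
      | _ u v =>
        have hadj : ∀ x y, G.Adj x y ↔ s(x, y) = s(u, v) := by
          intro x y
          rw [← SimpleGraph.mem_edgeSet, he, Set.mem_singleton_iff]
        have huv : u ≠ v := ((hadj u v).2 rfl).ne
        obtain ⟨f, hfu, hfv⟩ := exists_equiv_pair (finSumFinEquiv (m := 2) (n := r))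
          (Sum.inl 0) (Sum.inl 1) (by simp) u v huv
        refine ⟨f.toEmbedding, fun a b => ?_⟩
        rw [Hgraph_zero_adj, hadj, ← hfu, ← hfv, Sym2.eq_iff]
        simp only [Equiv.coe_toEmbedding, f.injective.eq_iff]
        rcases a with i | i <;> rcases b with j | j <;> simp
        omega
  · rintro ⟨hp, hr⟩ n m - hm
    obtain ⟨t, ht⟩ := exists_tailGraph n m hm
    refine ⟨tailGraph n t, ?_, ht⟩
    rintro ⟨f, hf⟩
    have hL : ∀ i j : Fin p, i ≠ j → (tailGraph n t).Adj (f (Sum.inl i)) (f (Sum.inl j)) := by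
      intro i j hij
      rw [hf, Hgraph_zero_adj]
      simpa using hij
    have hR : ∀ i : Fin p, f (Sum.inr ⟨0, hr⟩) ≠ f (Sum.inl i) := by
      intro i h
      have := f.injective h
      simp at this
    have hN : ∀ i : Fin p, ¬ (tailGraph n t).Adj (f (Sum.inr ⟨0, hr⟩)) (f (Sum.inl i)) := by
      intro i
      rw [hf, Hgraph_zero_adj]
      simp
    exact tailGraph_free (hL ⟨0, by omega⟩ ⟨1, by omega⟩ (by simp))
      (hL ⟨1, by omega⟩ ⟨2, by omega⟩ (by simp)) (hL ⟨0, by omega⟩ ⟨2, by omega⟩ (by simp))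
      (hR _) (hR _) (hR _) (hN _) (hN _) (hN _)
end

section
/- For all integers p ≥ 4, r ≥ 0, and q with 2 ≤ q ≤ p − 2, the family 𝓕(H(p,q,r)) of all induced H(p,q,r)-free graphs is feasible. -/
open SimpleGraph

/-- `n` vertices can be coloured so that exactly `t` ordered pairs are monochromatic. -/
def QCol (n t : ℕ) : Prop :=
  ∃ c : Fin n → ℕ, (∑ u, ∑ v, if c u = c v then 1 else 0) = t

lemma QCol.add {n t : ℕ} (h : QCol n t) (a : ℕ) : QCol (n + a) (t + a * a) := by
  obtain ⟨c, rfl⟩ := h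
  refine ⟨fun x => Sum.elim (fun u => c u + 1) (fun _ => 0) (finSumFinEquiv.symm x), ?_⟩
  simp [Fin.sum_univ_add, -Finset.sum_boole, Finset.sum_add_distrib]

lemma exists_tri (k : ℕ) : ∃ a, (a + 1) * a ≤ 2 * k ∧ 2 * k < (a + 2) * (a + 1) := by
  induction k with
  | zero => exact ⟨0, by simp, by simp⟩
  | succ k ih =>
    obtain ⟨a, h1, h2⟩ := ih
    by_cases h : 2 * (k + 1) < (a + 2) * (a + 1)
    · exact ⟨a, by omega, h⟩
    · refine ⟨a + 1, by push Not at h; linarith, ?_⟩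
      nlinarith

lemma exists_QCol (k : ℕ) : ∃ s, s ≤ k + 2 ∧ QCol s (s + 2 * k) := by
  have h0 : QCol 0 0 := ⟨fun _ => 0, by simp⟩
  induction k using Nat.strong_induction_on with
  | _ k ih =>
    rcases Nat.lt_or_ge k 3 with hk | hk
    · interval_cases k
      · exact ⟨0, by simp, h0⟩
      · exact ⟨2, by simp, h0.add 2⟩
      · exact ⟨4, by simp, (h0.add 2).add 2⟩
    · obtain ⟨a, h1, h2⟩ := exists_tri k
      have ha : 2 ≤ a := by
        by_contra hcon
        have : a ≤ 1 := by omega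
        interval_cases a <;> omega
      have he : ∃ j, (a + 1) * a = 2 * j := by
        have := Nat.even_mul_succ_self a
        obtain ⟨j, hj⟩ := this
        exact ⟨j, by linarith⟩
      obtain ⟨j, hj⟩ := he
      have hja : a + 1 ≤ j := by nlinarith
      obtain ⟨s, hs, hQ⟩ := ih (k - j) (by omega)
      refine ⟨s + (a + 1), by omega, ?_⟩
      have := hQ.add (a + 1)
      convert this using 1
      have : (a + 1) * (a + 1) = 2 * j + (a + 1) := by rw [← hj]; ring
      omega

lemma QCol_of_le (n k : ℕ) (h : k + 2 ≤ n) : QCol n (n + 2 * k) := by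
  obtain ⟨s, hs, hQ⟩ := exists_QCol k
  have : ∀ d, QCol (s + d) (s + d + 2 * k) := by
    intro d
    induction d with
    | zero => simpa using hQ
    | succ d ih =>
      have := ih.add 1
      rwa [show s + d + 2 * k + 1 * 1 = s + (d + 1) + 2 * k by omega] at this
  have := this (n - s)
  rwa [show s + (n - s) = n by omega] at this

/-- Complete multipartite graph on the vertices of nonzero colour; colour `0` is isolated. -/
def colGraph {n : ℕ} (c : Fin n → ℕ) : SimpleGraph (Fin n) where
  Adj u v := c u ≠ c v ∧ c u ≠ 0 ∧ c v ≠ 0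
  symm := ⟨fun _ _ h => ⟨h.1.symm, h.2.2, h.2.1⟩⟩
  loopless := ⟨fun _ h => h.1 rfl⟩

def PCol (n d : ℕ) : Prop :=
  ∃ c : Fin n → ℕ, (∑ u, ∑ v, if c u ≠ c v ∧ c u ≠ 0 ∧ c v ≠ 0 then 1 else 0) = d

lemma PCol.succ {n d : ℕ} (h : PCol n d) : PCol (n + 1) d := by
  obtain ⟨c, rfl⟩ := h
  refine ⟨Fin.cons 0 c, ?_⟩
  simp [Fin.sum_univ_succ, -Finset.sum_boole]

lemma QCol.toP {n t d : ℕ} (h : QCol n t) (hd : t + d = n * n) : PCol n d := by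
  obtain ⟨c, rfl⟩ := h
  refine ⟨fun u => c u + 1, ?_⟩
  have : (∑ u, ∑ v, if c u = c v then 1 else 0) +
      (∑ u, ∑ v, if c u + 1 ≠ c v + 1 ∧ c u + 1 ≠ 0 ∧ c v + 1 ≠ 0 then 1 else 0) = n * n := by
    simp_rw [← Finset.sum_add_distrib]
    have : ∀ u v, ((if c u = c v then 1 else 0) +
      (if c u + 1 ≠ c v + 1 ∧ c u + 1 ≠ 0 ∧ c v + 1 ≠ 0 then 1 else 0)) = 1 := by
      intro u v
      by_cases h : c u = c v <;> simp [h]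
    simp_rw [this]
    simp
  beta_reduce
  omega

lemma PCol_all (n m : ℕ) (h : 2 * m ≤ n * (n - 1)) : PCol n (2 * m) := by
  induction n with
  | zero =>
    have : m = 0 := by omega
    subst this
    exact ⟨fun _ => 0, by simp⟩
  | succ N ih =>
    by_cases hm : 2 * m ≤ N * (N - 1)
    · exact (ih hm).succ
    · obtain ⟨j, hj⟩ := Nat.even_mul_succ_self N
      have h' : 2 * m ≤ N * (N + 1) := by simpa [Nat.mul_comm] using h
      have hN : N * (N - 1) + 2 * N = N * (N + 1) := by
        cases N with
        | zero => simp
        | succ M => simp; ring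
      refine (QCol_of_le (N + 1) (j - m) (by omega)).toP ?_
      have : (N + 1) * (N + 1) = N * (N + 1) + (N + 1) := by ring
      omega

lemma colGraph_edges {n : ℕ} (c : Fin n → ℕ) (m : ℕ)
    (h : (∑ u, ∑ v, if c u ≠ c v ∧ c u ≠ 0 ∧ c v ≠ 0 then 1 else 0) = 2 * m) :
    (colGraph c).edgeSet.ncard = m := by
  classical
  have h1 := (colGraph c).sum_degrees_eq_twice_card_edges
  have h2 : ∀ u, (colGraph c).degree u =
      ∑ v, if c u ≠ c v ∧ c u ≠ 0 ∧ c v ≠ 0 then 1 else 0 := by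
    intro u
    rw [← SimpleGraph.card_neighborFinset_eq_degree, SimpleGraph.neighborFinset_eq_filter,
      Finset.card_filter]
    refine Finset.sum_congr rfl fun v _ => ?_
    simp only [colGraph]
    congr
  simp_rw [h2] at h1
  rw [h] at h1
  rw [← SimpleGraph.coe_edgeFinset, Set.ncard_coe_finset]
  omega

/-- For all `p ≥ 4`, `r ≥ 0` and `2 ≤ q ≤ p - 2`, the family `𝓕(H(p,q,r))` of all
induced `H(p,q,r)`-free graphs is feasible. -/
theorem feasible_indFreeFamily_Hgraph (p q r : ℕ) (hp : 4 ≤ p) (hq1 : 2 ≤ q)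
    (hq2 : q ≤ p - 2) : Feasible (IndFreeFamily (Hgraph p q r)) := by
  intro n m _ hm
  obtain ⟨c, hc⟩ := PCol_all n m (by omega)
  refine ⟨colGraph c, ?_, colGraph_edges c m hc⟩
  rintro ⟨f, hf⟩
  have key : ∀ i j : Fin p, (colGraph c).Adj (f (Sum.inl i)) (f (Sum.inl j)) ↔
      (i ≠ j ∧ ¬ ((i.val = 0 ∧ 1 ≤ j.val ∧ j.val ≤ q) ∨
        (j.val = 0 ∧ 1 ≤ i.val ∧ i.val ≤ q))) := by
    intro i j
    rw [hf]
    simp only [Hgraph, SimpleGraph.fromRel_adj]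
    constructor
    · rintro ⟨h1, ⟨a, b, h2, h3, h4⟩ | ⟨a, b, h2, h3, h4⟩⟩
      · cases h2; cases h3
        exact ⟨fun h => h1 (by rw [h]), h4⟩
      · cases h2; cases h3
        exact ⟨fun h => h1 (by rw [h]), fun h => h4 h.symm⟩
    · rintro ⟨h1, h2⟩
      exact ⟨fun h => h1 (Sum.inl.inj h), Or.inl ⟨i, j, rfl, rfl, h2⟩⟩
  let v0 : Fin p := ⟨0, by omega⟩
  let v1 : Fin p := ⟨1, by omega⟩
  let v2 : Fin p := ⟨2, by omega⟩
  let v3 : Fin p := ⟨p - 1, by omega⟩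
  have a12 := (key v1 v2).2 (by simp [v1, v2])
  have a03 := (key v0 v3).2 (by simp [v0, v3, Fin.ext_iff]; omega)
  have n01 : ¬ _ := fun h => ((key v0 v1).1 h).2 (by simp [v0, v1]; omega)
  have n02 : ¬ _ := fun h => ((key v0 v2).1 h).2 (by simp [v0, v2]; omega)
  simp only [colGraph] at a12 a03 n01 n02
  have e1 : c (f (Sum.inl v0)) = c (f (Sum.inl v1)) := by
    by_contra h; exact n01 ⟨h, a03.2.1, a12.2.1⟩
  have e2 : c (f (Sum.inl v0)) = c (f (Sum.inl v2)) := by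
    by_contra h; exact n02 ⟨h, a03.2.1, a12.2.2⟩
  exact a12.1 (e1.symm.trans e2)
end

section
/- For every integer r ≥ 1, the families 𝓕(H(3,0,r)) and 𝓕(H(3,1,r)) are feasible; that is, the family of all graphs with no induced copy of K_3 ∪ rK_1 (a triangle plus r isolated vertices) is feasible, and the family of all graphs with no induced copy of (K_3 ∖ K_2) ∪ rK_1 (a path on three vertices plus r isolated vertices) is feasible. For r = 0, neither family is feasible. -/
open SimpleGraph

/-- Extend `G` by a new vertex `none`, adjacent to the vertices in `S`. -/
def addVertex {V : Type} (G : SimpleGraph V) (S : Finset V) : SimpleGraph (Option V) where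
  Adj a b := match a, b with
    | some x, some y => G.Adj x y
    | none, some y => y ∈ S
    | some x, none => x ∈ S
    | none, none => False
  symm := ⟨by
    rintro (_ | x) (_ | y) h
    · exact h
    · exact h
    · exact h
    · exact SimpleGraph.Adj.symm (G := G) h⟩
  loopless := ⟨by
    rintro (_ | x) h
    · exact h
    · exact G.loopless.irrefl x h⟩

theorem addVertex_edges {V : Type} [Fintype V] (G : SimpleGraph V) (S : Finset V) :
    (addVertex G S).edgeSet.ncard = G.edgeSet.ncard + S.card := by
  have h : (addVertex G S).edgeSet =
      (Sym2.map some '' G.edgeSet) ∪ ((fun y => s(none, some y)) '' (S : Set V)) := by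
    ext e
    induction e using Sym2.ind with
    | _ a b =>
    simp only [SimpleGraph.mem_edgeSet, Set.mem_union, Set.mem_image]
    constructor
    · intro h
      rcases a with _ | x <;> rcases b with _ | y
      · exact h.elim
      · exact Or.inr ⟨y, h, rfl⟩
      · exact Or.inr ⟨x, h, Sym2.eq_swap⟩
      · exact Or.inl ⟨s(x, y), h, rfl⟩
    · rintro (⟨e, he, heq⟩ | ⟨y, hy, heq⟩)
      · induction e using Sym2.ind with
        | _ x y =>
        have : (addVertex G S).Adj (some x) (some y) := he
        rw [← SimpleGraph.mem_edgeSet] at this ⊢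
        rw [← heq]; exact this
      · have : (addVertex G S).Adj none (some y) := hy
        rw [← SimpleGraph.mem_edgeSet] at this ⊢
        rw [← heq]; exact this
  rw [h, Set.ncard_union_eq _ (Set.toFinite _) (Set.toFinite _),
    Set.ncard_image_of_injective _ (Sym2.map.injective (Option.some_injective V)),
    Set.ncard_image_of_injective, Set.ncard_coe_finset]
  · intro x y hxy
    simpa using hxy
  · rw [Set.disjoint_left]
    rintro _ ⟨e, he, rfl⟩ ⟨y, hy, heq⟩
    induction e using Sym2.ind with
    | _ x z => simp at heq

theorem feasiblePair_of_type {α : Type} (H : SimpleGraph α) {V : Type} [Fintype V]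
    (G : SimpleGraph V) (hG : ¬ IndContains H G) :
    FeasiblePair (IndFreeFamily H) (Fintype.card V) G.edgeSet.ncard := by
  let e := Fintype.equivFin V
  let I : G ≃g G.map e.toEmbedding := SimpleGraph.Iso.map e G
  refine ⟨G.map e.toEmbedding, ?_, ?_⟩
  · rintro ⟨f, hf⟩
    apply hG
    refine ⟨f.trans I.symm.toEquiv.toEmbedding, fun a b => ?_⟩
    rw [← hf]
    exact I.symm.map_adj_iff
  · exact (Nat.card_congr I.mapEdgeSet).symm

theorem feasible_of_base {α : Type} (H : SimpleGraph α)
    (hdom : ∀ a, ∃ b, b ≠ a ∧ ¬ H.Adj a b)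
    (hbase : ∀ n m, m < n → FeasiblePair (IndFreeFamily H) (n + 1) m)
    (h1 : FeasiblePair (IndFreeFamily H) 1 0) :
    Feasible (IndFreeFamily H) := by
  intro n m hn
  induction n, hn using Nat.le_induction generalizing m with
  | base => intro hm; obtain rfl : m = 0 := by simpa using hm
            exact h1
  | succ n hn ih =>
    intro hm
    by_cases hmn : m < n
    · exact hbase n m hmn
    have key : (n + 1) * (n + 1 - 1) / 2 = n * (n - 1) / 2 + n := by
      obtain ⟨k, rfl⟩ : ∃ k, n = k + 1 := ⟨n - 1, by omega⟩
      have : (k + 1 + 1) * (k + 1 + 1 - 1) = (k + 1) * (k + 1 - 1) + (k + 1) * 2 := by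
        simp only [Nat.add_sub_cancel]; ring
      rw [this, Nat.add_mul_div_right _ _ (by norm_num)]
    obtain ⟨G, hG, hGm⟩ := ih (m - n) (by omega)
    have hF : ¬ IndContains H (addVertex G Finset.univ) := by
      rintro ⟨f, hf⟩
      have hne : ∀ a, f a ≠ none := by
        intro a ha
        obtain ⟨b, hb, hab⟩ := hdom a
        apply hab
        rw [← hf, ha]
        rcases hfb : f b with _ | y
        · exact absurd (f.injective (hfb.trans ha.symm)) hb
        · exact Finset.mem_univ y
      choose g hg using fun a => Option.ne_none_iff_exists'.1 (hne a)
      apply hG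
      refine ⟨⟨g, fun a b hab => f.injective (by rw [hg, hg, hab])⟩, fun a b => ?_⟩
      rw [← hf, hg, hg]
      rfl
    have := feasiblePair_of_type H _ hF
    rw [addVertex_edges, hGm] at this
    simpa [Nat.sub_add_cancel (not_lt.1 hmn)] using this

/-- Disjoint unions of cliques. -/
def P3Free {V : Type} (G : SimpleGraph V) : Prop :=
  ∀ a b c, G.Adj a b → G.Adj b c → a ≠ c → G.Adj a c

theorem p3Free_add {V : Type} (G : SimpleGraph V) (S : Finset V) (hG : P3Free G)
    (hcl : ∀ x ∈ S, ∀ y ∈ S, x ≠ y → G.Adj x y)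
    (hS : ∀ x ∈ S, ∀ y, G.Adj x y → y ∈ S) : P3Free (addVertex G S) := by
  rintro (_ | a) (_ | b) (_ | c) h1 h2 h3
  · exact h1
  · exact h2
  · exact (h3 rfl).elim
  · exact hS b h1 c h2
  · exact h1
  · exact hcl a h1 c h2 (fun h => h3 (by rw [h]))
  · exact hS b h2 a (SimpleGraph.Adj.symm (G := G) h1)
  · exact hG a b c h1 h2 (fun h => h3 (by rw [h]))

/-- There is a disjoint union of cliques with `n` vertices and `m` edges. -/
def CliqueUnion (n m : ℕ) : Prop :=
  ∃ (V : Type) (_ : Fintype V) (G : SimpleGraph V),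
    P3Free G ∧ Fintype.card V = n ∧ G.edgeSet.ncard = m

theorem cliqueUnion_zero (n : ℕ) : CliqueUnion n 0 :=
  ⟨Fin n, inferInstance, ⊥, fun a b c h => h.elim, by simp, by simp⟩

theorem cliqueUnion_two {n m : ℕ} (h : CliqueUnion n m) : CliqueUnion (n + 2) (m + 1) := by
  obtain ⟨V, _, G, hG, hn, hm⟩ := h
  refine ⟨_, inferInstance, addVertex (addVertex G ∅) {none}, ?_, by simp [hn], ?_⟩
  · apply p3Free_add
    · apply p3Free_add _ _ hG <;> simp
    · simp
    · rintro x hx (_ | y) h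
      · simp
      · obtain rfl := Finset.mem_singleton.1 hx
        exact absurd h (Finset.notMem_empty y)
  · rw [addVertex_edges, addVertex_edges, hm]; simp

theorem cliqueUnion_three {n m : ℕ} (h : CliqueUnion n m) : CliqueUnion (n + 3) (m + 3) := by
  classical
  obtain ⟨V, _, G, hG, hn, hm⟩ := h
  refine ⟨_, inferInstance,
    addVertex (addVertex (addVertex G ∅) {none}) {none, some none}, ?_, by simp [hn], ?_⟩
  · apply p3Free_add
    · apply p3Free_add
      · apply p3Free_add _ _ hG <;> simp
      · simp
      · rintro x hx (_ | y) h
        · simp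
        · obtain rfl := Finset.mem_singleton.1 hx
          exact absurd h (Finset.notMem_empty y)
    · rintro (_ | _ | x) hx (_ | _ | y) hy hxy <;> simp [addVertex] at *
    · rintro (_ | _ | x) hx (_ | _ | y) h <;> simp [addVertex] at *
  · rw [addVertex_edges, addVertex_edges, addVertex_edges, hm]; simp

theorem cliqueUnion_small (m : ℕ) : ∀ n, m + 2 ≤ n → CliqueUnion n m := by
  induction m using Nat.strong_induction_on with
  | _ m ih =>
  intro n hn
  by_cases h3 : 3 ≤ m
  · obtain ⟨k, rfl⟩ : ∃ k, m = k + 3 := ⟨m - 3, by omega⟩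
    obtain ⟨l, rfl⟩ : ∃ l, n = l + 3 := ⟨n - 3, by omega⟩
    exact cliqueUnion_three (ih k (by omega) l (by omega))
  · obtain rfl | rfl | rfl : m = 0 ∨ m = 1 ∨ m = 2 := by omega
    · exact cliqueUnion_zero n
    · obtain ⟨l, rfl⟩ : ∃ l, n = l + 2 := ⟨n - 2, by omega⟩
      exact cliqueUnion_two (cliqueUnion_zero l)
    · obtain ⟨l, rfl⟩ : ∃ l, n = l + 2 + 2 := ⟨n - 4, by omega⟩
      exact cliqueUnion_two (cliqueUnion_two (cliqueUnion_zero l))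

theorem hgraph_dom (q r : ℕ) (hr : 1 ≤ r) (a : Fin 3 ⊕ Fin r) :
    ∃ b, b ≠ a ∧ ¬ (Hgraph 3 q r).Adj a b := by
  rcases a with i | j
  · exact ⟨Sum.inr ⟨0, hr⟩, by simp, by simp [Hgraph]⟩
  · exact ⟨Sum.inl 0, by simp, by simp [Hgraph]⟩

theorem hgraph_one (q r : ℕ) : FeasiblePair (IndFreeFamily (Hgraph 3 q r)) 1 0 := by
  refine ⟨⊥, ?_, by simp⟩
  rintro ⟨f, hf⟩
  have := f.injective (Subsingleton.elim (f (Sum.inl 0)) (f (Sum.inl 1)))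
  simp at this

theorem feasible_zero (r : ℕ) (hr : 1 ≤ r) : Feasible (IndFreeFamily (Hgraph 3 0 r)) := by
  refine feasible_of_base _ (hgraph_dom 0 r hr) ?_ (hgraph_one 0 r)
  intro n m hmn
  obtain ⟨S, -, hS⟩ := Finset.exists_subset_card_eq
    (s := (Finset.univ : Finset (Fin n))) (n := m) (by simpa using hmn.le)
  have hF : ¬ IndContains (Hgraph 3 0 r) (addVertex (⊥ : SimpleGraph (Fin n)) S) := by
    rintro ⟨f, hf⟩
    have h01 := (hf (Sum.inl 0) (Sum.inl 1)).2 (by simp [Hgraph])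
    have h02 := (hf (Sum.inl 0) (Sum.inl 2)).2 (by simp [Hgraph])
    have h12 := (hf (Sum.inl 1) (Sum.inl 2)).2 (by simp [Hgraph])
    generalize f (Sum.inl 0) = x at *
    generalize f (Sum.inl 1) = y at *
    generalize f (Sum.inl 2) = z at *
    rcases x with _ | x <;> rcases y with _ | y <;> rcases z with _ | z <;>
      simp [addVertex] at *
  have := feasiblePair_of_type _ _ hF
  rw [addVertex_edges, hS] at this
  simpa using this

theorem feasible_one (r : ℕ) (hr : 1 ≤ r) : Feasible (IndFreeFamily (Hgraph 3 1 r)) := by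
  refine feasible_of_base _ (hgraph_dom 1 r hr) ?_ (hgraph_one 1 r)
  intro n m hmn
  obtain ⟨V, _, G, hG, hn, hm⟩ := cliqueUnion_small m (n + 1) (by omega)
  have hF : ¬ IndContains (Hgraph 3 1 r) G := by
    rintro ⟨f, hf⟩
    have h02 := (hf (Sum.inl 0) (Sum.inl 2)).2 (by simp [Hgraph])
    have h21 := (hf (Sum.inl 2) (Sum.inl 1)).2 (by simp [Hgraph])
    have h01 := (hf (Sum.inl 0) (Sum.inl 1)).1 (hG _ _ _ h02 h21 (by simp))
    simp [Hgraph] at h01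
  have := feasiblePair_of_type _ _ hF
  rwa [hn, hm] at this

theorem edges_three (G : SimpleGraph (Fin 3)) [DecidableRel G.Adj] :
    G.edgeSet.ncard = (if G.Adj 0 1 then 1 else 0) + (if G.Adj 0 2 then 1 else 0)
      + (if G.Adj 1 2 then 1 else 0) := by
  have h := G.sum_degrees_eq_twice_card_edges
  rw [← SimpleGraph.coe_edgeFinset, Set.ncard_coe_finset]
  have hd : ∀ v, G.degree v = ∑ w, if G.Adj v w then 1 else 0 := by
    intro v
    rw [← SimpleGraph.card_neighborFinset_eq_degree, SimpleGraph.neighborFinset_eq_filter,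
      Finset.card_filter]
  simp only [hd, Fin.sum_univ_three, SimpleGraph.irrefl, if_false,
    G.adj_comm 1 0, G.adj_comm 2 0, G.adj_comm 2 1] at h
  omega

theorem indContains_of_three (q : ℕ) (G : SimpleGraph (Fin 3)) (f : Fin 3 ↪ Fin 3)
    (h : ∀ i j : Fin 3, G.Adj (f i) (f j) ↔ (Hgraph 3 q 0).Adj (Sum.inl i) (Sum.inl j)) :
    IndContains (Hgraph 3 q 0) G := by
  refine ⟨(Equiv.sumEmpty (Fin 3) (Fin 0)).toEmbedding.trans f, ?_⟩
  rintro (i | i) (j | j)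
  · exact h i j
  · exact j.elim0
  · exact i.elim0
  · exact i.elim0

theorem not_feasible_zero : ¬ Feasible (IndFreeFamily (Hgraph 3 0 0)) := by
  classical
  intro h
  obtain ⟨G, hG, hm⟩ := h 3 3 (by norm_num) (by norm_num)
  rw [edges_three] at hm
  have h01 : G.Adj 0 1 := by by_contra h; simp only [h, if_false] at hm; split_ifs at hm <;> omega
  have h02 : G.Adj 0 2 := by by_contra h; simp only [h, if_false] at hm; split_ifs at hm <;> omega
  have h12 : G.Adj 1 2 := by by_contra h; simp only [h, if_false] at hm; split_ifs at hm <;> omega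
  apply hG
  apply indContains_of_three 0 G (Function.Embedding.refl _)
  intro i j
  fin_cases i <;> fin_cases j <;>
    simp [Hgraph, h01, h02, h12, h01.symm, h02.symm, h12.symm]

theorem not_feasible_one : ¬ Feasible (IndFreeFamily (Hgraph 3 1 0)) := by
  classical
  intro h
  obtain ⟨G, hG, hm⟩ := h 3 2 (by norm_num) (by norm_num)
  rw [edges_three] at hm
  apply hG
  by_cases h01 : G.Adj 0 1 <;> by_cases h02 : G.Adj 0 2 <;> by_cases h12 : G.Adj 1 2 <;>
    simp [h01, h02, h12] at hm
  · apply indContains_of_three 1 G (Equiv.swap (0 : Fin 3) 2).toEmbedding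
    have h12' : ¬ G.Adj 2 1 := fun h => h12 h.symm
    have e : Equiv.swap (0 : Fin 3) 2 1 = 1 := by decide
    intro i j
    fin_cases i <;> fin_cases j <;>
      simp [Hgraph, h01, h02, h12, h01.symm, h02.symm, h12', e]
  · apply indContains_of_three 1 G (Equiv.swap (1 : Fin 3) 2).toEmbedding
    have h02' : ¬ G.Adj 2 0 := fun h => h02 h.symm
    have e : Equiv.swap (1 : Fin 3) 2 0 = 0 := by decide
    intro i j
    fin_cases i <;> fin_cases j <;>
      simp [Hgraph, h01, h02, h12, h01.symm, h12.symm, h02', e]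
  · apply indContains_of_three 1 G (Function.Embedding.refl _)
    have h01' : ¬ G.Adj 1 0 := fun h => h01 h.symm
    intro i j
    fin_cases i <;> fin_cases j <;>
      simp [Hgraph, h01, h02, h12, h02.symm, h12.symm, h01']

/-- For every `r ≥ 1`, the families `𝓕(H(3,0,r))` (no induced `K_3 ∪ rK_1`) and
`𝓕(H(3,1,r))` (no induced `(K_3 ∖ K_2) ∪ rK_1`) are feasible, while for `r = 0`
neither family is feasible. -/
theorem feasible_indFreeFamily_H3 :
    (∀ r : ℕ, 1 ≤ r →
      Feasible (IndFreeFamily (Hgraph 3 0 r)) ∧ Feasible (IndFreeFamily (Hgraph 3 1 r))) ∧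
    ¬ Feasible (IndFreeFamily (Hgraph 3 0 0)) ∧ ¬ Feasible (IndFreeFamily (Hgraph 3 1 0)) := by
  exact ⟨fun r hr => ⟨feasible_zero r hr, feasible_one r hr⟩, not_feasible_zero, not_feasible_one⟩
end

section
/- For every integer p ≥ 4: (1) for every r ≥ 0 the family 𝓕(H(p,p−1,r)) is feasible; (2) for every r ≥ 1 the family 𝓕(H(p,1,r)) is feasible, while 𝓕(H(p,1,0)) (the family of graphs with no induced K_p ∖ K_2) is not feasible. -/
open SimpleGraph

/-- triangular numbers -/
def tri (j : ℕ) : ℕ := j.choose 2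

lemma tri_succ (j : ℕ) : tri (j + 1) = tri j + j := by
  unfold tri
  rw [Nat.choose_succ_succ' j 1]; simp; omega

lemma tri_mono {a b : ℕ} (h : a ≤ b) : tri a ≤ tri b := Nat.choose_le_choose 2 h

lemma tri_lt {a b : ℕ} (h : a < b) : tri a + a ≤ tri b := by
  rw [← tri_succ]; exact tri_mono h

lemma tri_exists (k : ℕ) : ∃ j i : ℕ, i < j ∧ tri j + i = k := by
  induction k with
  | zero => exact ⟨1, 0, by simp, by simp [tri]⟩
  | succ k ih =>
    obtain ⟨j, i, h, e⟩ := ih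
    by_cases h' : i + 1 < j
    · exact ⟨j, i + 1, h', by omega⟩
    · refine ⟨j + 1, 0, by omega, ?_⟩
      rw [tri_succ]; omega

/-- complement of the colex graph -/
def cg (n t : ℕ) : SimpleGraph (Fin n) where
  Adj i j := i ≠ j ∧ t ≤ tri (max i.val j.val) + min i.val j.val
  symm := ⟨fun i j h => ⟨h.1.symm, by rw [max_comm, min_comm]; exact h.2⟩⟩
  loopless := ⟨fun i h => h.1 rfl⟩

lemma cg_card (n t : ℕ) : (cg n t).edgeSet.ncard = tri n - t := by
  have key : Set.BijOn (fun x : ℕ × ℕ => tri x.2 + x.1)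
      {x : ℕ × ℕ | x.1 < x.2 ∧ x.2 < n ∧ t ≤ tri x.2 + x.1} (Finset.Ico t (tri n) : Finset ℕ) := by
    refine ⟨?_, ?_, ?_⟩
    · rintro ⟨i, j⟩ ⟨h1, h2, h3⟩
      have := tri_lt h2
      simp only [Finset.coe_Ico, Set.mem_Ico]
      simp only at h1 h2 h3 this
      omega
    · rintro ⟨i, j⟩ ⟨h1, h2, h3⟩ ⟨i', j'⟩ ⟨h1', h2', h3'⟩ e
      simp only at *
      rcases lt_trichotomy j j' with h | h | h
      · have := tri_lt h; omega
      · subst h; simp; omega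
      · have := tri_lt h; omega
    · intro k hk
      obtain ⟨j, i, h, e⟩ := tri_exists k
      simp only [Finset.coe_Ico, Set.mem_Ico] at hk
      refine ⟨(i, j), ⟨h, ?_, ?_⟩, e⟩
      · by_contra hc
        have := tri_mono (not_lt.mp hc)
        simp only at this
        omega
      · simp only; omega
  have c1 := Set.ncard_congr' (key.equiv)
  rw [Set.ncard_coe_finset, Nat.card_Ico] at c1
  rw [← c1]
  symm
  refine Set.ncard_congr (fun x hx => s(⟨x.1, hx.1.trans hx.2.1⟩, ⟨x.2, hx.2.1⟩)) ?_ ?_ ?_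
  · rintro ⟨i, j⟩ ⟨h1, h2, h3⟩
    simp only at h1 h2 h3
    simp only [SimpleGraph.mem_edgeSet, cg, ne_eq, Fin.mk.injEq]
    rw [max_eq_right h1.le, min_eq_left h1.le]
    exact ⟨by omega, h3⟩
  · rintro ⟨i, j⟩ ⟨i', j'⟩ ⟨h1, h2, h3⟩ ⟨h1', h2', h3'⟩ e
    simp only at *
    simp only [Sym2.eq_iff, Fin.mk.injEq] at e
    simp; omega
  · intro e
    induction e with
    | _ a b =>
    intro h
    obtain ⟨hne, h⟩ := h
    rcases lt_or_gt_of_ne hne with hl | hl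
    · have hl' : a.val < b.val := hl
      rw [max_eq_right hl'.le, min_eq_left hl'.le] at h
      exact ⟨(a.val, b.val), ⟨hl', b.isLt, h⟩, rfl⟩
    · have hl' : b.val < a.val := hl
      rw [max_eq_left hl'.le, min_eq_right hl'.le] at h
      exact ⟨(b.val, a.val), ⟨hl', a.isLt, h⟩, Sym2.eq_swap⟩

lemma cg_sorted (n t : ℕ) (x y z c : Fin n) (hxy : x < y) (hyz : y < z)
    (h1 : (cg n t).Adj x y) (hc : c ≠ z) (h : ¬ (cg n t).Adj c z) : False := by
  apply h
  refine ⟨hc, ?_⟩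
  have h1 := h1.2
  have hxy' : x.val < y.val := hxy
  have hyz' : y.val < z.val := hyz
  rw [max_eq_right hxy'.le, min_eq_left hxy'.le] at h1
  have := tri_lt hyz'
  have := tri_mono (le_max_right c.val z.val)
  omega

lemma cg_free (n t : ℕ) (x y z c : Fin n)
    (hxy : (cg n t).Adj x y) (hxz : (cg n t).Adj x z) (hyz : (cg n t).Adj y z)
    (cx : c ≠ x) (cy : c ≠ y) (cz : c ≠ z)
    (nx : ¬ (cg n t).Adj c x) (ny : ¬ (cg n t).Adj c y) (nz : ¬ (cg n t).Adj c z) : False := by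
  rcases lt_or_gt_of_ne hxy.ne with h1 | h1 <;>
  rcases lt_or_gt_of_ne hyz.ne with h2 | h2 <;>
  rcases lt_or_gt_of_ne hxz.ne with h3 | h3
  · exact cg_sorted n t x y z c h1 h2 hxy cz nz
  · exact absurd (h1.trans h2) (lt_asymm h3)
  · exact cg_sorted n t x z y c h3 h2 hxz cy ny
  · exact cg_sorted n t z x y c h3 h1 hxz.symm cy ny
  · exact cg_sorted n t y x z c h1 h3 hxy.symm cz nz
  · exact cg_sorted n t y z x c h2 h3 hyz cx nx
  · exact absurd (h3.trans h2) (lt_asymm h1)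
  · exact cg_sorted n t z y x c h2 h1 hyz.symm cx nx

lemma feas_of {α : Type*} (G : SimpleGraph α) (x y z c : α)
    (hxy : G.Adj x y) (hxz : G.Adj x z) (hyz : G.Adj y z)
    (cx : c ≠ x) (cy : c ≠ y) (cz : c ≠ z)
    (nx : ¬ G.Adj c x) (ny : ¬ G.Adj c y) (nz : ¬ G.Adj c z) : Feasible (IndFreeFamily G) := by
  intro n m _ hm
  have hm' : m ≤ tri n := by rw [tri, Nat.choose_two_right]; exact hm
  refine ⟨cg n (tri n - m), ?_, by rw [cg_card]; omega⟩
  rintro ⟨f, hf⟩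
  exact cg_free n _ (f x) (f y) (f z) (f c) ((hf _ _).2 hxy) ((hf _ _).2 hxz) ((hf _ _).2 hyz)
    (f.injective.ne cx) (f.injective.ne cy) (f.injective.ne cz)
    (fun h => nx ((hf _ _).1 h)) (fun h => ny ((hf _ _).1 h)) (fun h => nz ((hf _ _).1 h))

lemma H_inl (p q r : ℕ) (i j : Fin p) : (Hgraph p q r).Adj (Sum.inl i) (Sum.inl j) ↔
    i ≠ j ∧ ¬ ((i.val = 0 ∧ 1 ≤ j.val ∧ j.val ≤ q) ∨ (j.val = 0 ∧ 1 ≤ i.val ∧ i.val ≤ q)) := by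
  simp only [Hgraph, SimpleGraph.fromRel_adj, ne_eq, Sum.inl.injEq]
  constructor
  · rintro ⟨h, ⟨a, b, rfl, rfl, h'⟩ | ⟨a, b, rfl, rfl, h'⟩⟩
    · exact ⟨h, h'⟩
    · exact ⟨h, fun h'' => h' h''.symm⟩
  · rintro ⟨h, h'⟩
    exact ⟨h, Or.inl ⟨i, j, rfl, rfl, h'⟩⟩

lemma H_inr (p q r : ℕ) (i : Fin r) (j : Fin p) :
    ¬ (Hgraph p q r).Adj (Sum.inr i) (Sum.inl j) := by
  simp [Hgraph, SimpleGraph.fromRel_adj]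

lemma not_feas (p : ℕ) (hp : 4 ≤ p) : ¬ Feasible (IndFreeFamily (Hgraph p 1 0)) := by
  intro hF
  obtain ⟨G, hG, hc⟩ := hF p (p * (p - 1) / 2 - 1) (by omega) (by omega)
  rw [← Nat.choose_two_right] at hc
  have hpos : 0 < p.choose 2 := Nat.choose_pos (by omega)
  have h1 : Gᶜ.edgeSet.ncard = 1 := by
    classical
    have hd : Disjoint G.edgeSet Gᶜ.edgeSet :=
      SimpleGraph.disjoint_edgeSet.2 disjoint_compl_right
    have hu : G.edgeSet ∪ Gᶜ.edgeSet = (⊤ : SimpleGraph (Fin p)).edgeSet := by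
      rw [← SimpleGraph.edgeSet_sup, sup_compl_eq_top]
    have hn := Set.ncard_union_eq hd (Set.toFinite _) (Set.toFinite _)
    rw [hu, ← SimpleGraph.coe_edgeFinset, Set.ncard_coe_finset,
      SimpleGraph.card_edgeFinset_top_eq_card_choose_two, Fintype.card_fin] at hn
    omega
  obtain ⟨e, he⟩ := Set.ncard_eq_one.1 h1
  induction e with
  | _ a b =>
  have hadj : ∀ x y, Gᶜ.Adj x y ↔ (x = a ∧ y = b) ∨ (x = b ∧ y = a) := by
    intro x y
    rw [← SimpleGraph.mem_edgeSet, he, Set.mem_singleton_iff, Sym2.eq_iff]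
  have hab : a ≠ b := ((hadj a b).2 (Or.inl ⟨rfl, rfl⟩)).ne
  let z : Fin p := ⟨0, by omega⟩
  let o : Fin p := ⟨1, by omega⟩
  have hzo : z ≠ o := by simp [z, o]
  let σ : Equiv.Perm (Fin p) := Equiv.swap z a * Equiv.swap o (Equiv.swap z a b)
  have hz : σ z = a := by
    have hb : z ≠ Equiv.swap z a b := by
      intro h
      have := congrArg (Equiv.swap z a) h
      simp at this
      exact hab this
    simp only [σ, Equiv.Perm.mul_apply]
    rw [Equiv.swap_apply_of_ne_of_ne hzo hb, Equiv.swap_apply_left]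
  have ho : σ o = b := by
    simp [σ, Equiv.Perm.mul_apply]
  refine hG ⟨(Equiv.sumEmpty (Fin p) (Fin 0)).toEmbedding.trans σ.toEmbedding, ?_⟩
  rintro (i | i) (j | j)
  · have e1 := hadj (σ i) (σ j)
    rw [← hz, ← ho] at e1
    simp only [σ.injective.eq_iff, SimpleGraph.compl_adj, ne_eq] at e1
    rw [H_inl]
    simp only [Function.Embedding.trans_apply, Equiv.coe_toEmbedding, Equiv.sumEmpty_apply_inl]
    have hi : i = z ↔ i.val = 0 := by simp [z, Fin.ext_iff]
    have hj : j = z ↔ j.val = 0 := by simp [z, Fin.ext_iff]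
    have hi' : i = o ↔ i.val = 1 := by simp [o, Fin.ext_iff]
    have hj' : j = o ↔ j.val = 1 := by simp [o, Fin.ext_iff]
    rw [hi, hj, hi', hj'] at e1
    have hne : G.Adj (σ i) (σ j) → i ≠ j := fun h h' => h.ne (congrArg σ h')
    have k1 : (1 ≤ j.val ∧ j.val ≤ 1) ↔ j.val = 1 := by omega
    have k2 : (1 ≤ i.val ∧ i.val ≤ 1) ↔ i.val = 1 := by omega
    rw [k1, k2]
    clear hi hj hi' hj' k1 k2
    generalize G.Adj (σ i) (σ j) = A at e1 hne ⊢
    constructor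
    · intro hA
      exact ⟨hne hA, fun h => (e1.2 (h.imp id fun h => ⟨h.2, h.1⟩)).2 hA⟩
    · rintro ⟨h1, h2⟩
      by_contra hA
      exact h2 ((e1.1 ⟨h1, hA⟩).imp id fun h => ⟨h.2, h.1⟩)
  · exact j.elim0
  · exact i.elim0
  · exact i.elim0

/-- For every `p ≥ 4`: the family `𝓕(H(p,p-1,r))` is feasible for every `r ≥ 0`;
the family `𝓕(H(p,1,r))` is feasible for every `r ≥ 1`; and `𝓕(H(p,1,0))`
(the family of graphs with no induced `K_p ∖ K_2`) is not feasible. -/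
theorem feasible_indFreeFamily_Hgraph_extremes (p : ℕ) (hp : 4 ≤ p) :
    (∀ r : ℕ, Feasible (IndFreeFamily (Hgraph p (p - 1) r))) ∧
    (∀ r : ℕ, 1 ≤ r → Feasible (IndFreeFamily (Hgraph p 1 r))) ∧
    ¬ Feasible (IndFreeFamily (Hgraph p 1 0)) := by
  refine ⟨fun r => ?_, fun r hr => ?_, not_feas p hp⟩
  · refine feas_of _ (Sum.inl ⟨1, by omega⟩) (Sum.inl ⟨2, by omega⟩) (Sum.inl ⟨3, by omega⟩)
      (Sum.inl ⟨0, by omega⟩) ?_ ?_ ?_ ?_ ?_ ?_ ?_ ?_ ?_ <;> simp [H_inl] <;> omega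
  · refine feas_of _ (Sum.inl ⟨1, by omega⟩) (Sum.inl ⟨2, by omega⟩) (Sum.inl ⟨3, by omega⟩)
      (Sum.inr ⟨0, by omega⟩) ?_ ?_ ?_ ?_ ?_ ?_ ?_ ?_ ?_ <;> simp [H_inl, H_inr]
end

section
/- The family 𝓕(Paw, Claw) of all finite simple graphs that are simultaneously induced Paw-free and induced Claw-free is not feasible, and likewise the family 𝓕(P_3 ∪ K_1, K_3 ∪ K_1) of all finite simple graphs that are simultaneously induced (P_3 ∪ K_1)-free and induced (K_3 ∪ K_1)-free is not feasible. -/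
open SimpleGraph

/-- The Paw: a triangle on the vertices `0, 1, 2` with the pendant edge `{2, 3}`. -/
def pawGraph : SimpleGraph (Fin 4) :=
  SimpleGraph.fromEdgeSet {s(0, 1), s(0, 2), s(1, 2), s(2, 3)}

/-- The Claw `K_{1,3}`: the center `0` joined to the three leaves `1, 2, 3`. -/
def clawGraph : SimpleGraph (Fin 4) :=
  SimpleGraph.fromEdgeSet {s(0, 1), s(0, 2), s(0, 3)}

/-- `P_3 ∪ K_1`: the path `0 - 1 - 2` on three vertices plus the isolated vertex `3`. -/
def p3k1Graph : SimpleGraph (Fin 4) :=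
  SimpleGraph.fromEdgeSet {s(0, 1), s(1, 2)}

/-- `K_3 ∪ K_1`: the triangle on `0, 1, 2` plus the isolated vertex `3`. -/
def k3k1Graph : SimpleGraph (Fin 4) :=
  SimpleGraph.fromEdgeSet {s(0, 1), s(0, 2), s(1, 2)}

/-- Adjacency on five vertices coded by ten Booleans. -/
def adjCode (p q r s t u v w x y : Bool) (i j : Fin 5) : Bool :=
  match i, j with
  | 0, 1 => p | 1, 0 => p | 0, 2 => q | 2, 0 => q | 0, 3 => r | 3, 0 => r
  | 0, 4 => s | 4, 0 => s | 1, 2 => t | 2, 1 => t | 1, 3 => u | 3, 1 => u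
  | 1, 4 => v | 4, 1 => v | 2, 3 => w | 3, 2 => w | 2, 4 => x | 4, 2 => x
  | 3, 4 => y | 4, 3 => y | _, _ => false

theorem adjCode_key : ∀ p q r s t u v w x y : Bool,
    p.toNat + q.toNat + r.toNat + s.toNat + t.toNat + u.toNat + v.toNat + w.toNat
      + x.toNat + y.toNat = 3 →
    ∃ a b c d : Fin 5, a ≠ c ∧ d ≠ a ∧ d ≠ b ∧ d ≠ c ∧
      adjCode p q r s t u v w x y a b = true ∧ adjCode p q r s t u v w x y b c = true ∧
      adjCode p q r s t u v w x y d a = false ∧ adjCode p q r s t u v w x y d b = false ∧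
      adjCode p q r s t u v w x y d c = false := by
  decide +kernel

/-- A graph with five vertices and degree sum six has a vertex `d` isolated from a
(not necessarily induced) path `a - b - c`. -/
theorem exists_cherry (G : SimpleGraph (Fin 5)) [DecidableRel G.Adj]
    (h : ∑ v, G.degree v = 6) :
    ∃ a b c d : Fin 5, a ≠ c ∧ d ≠ a ∧ d ≠ b ∧ d ≠ c ∧
      G.Adj a b ∧ G.Adj b c ∧ ¬ G.Adj d a ∧ ¬ G.Adj d b ∧ ¬ G.Adj d c := by
  have hA : ∀ i j, adjCode (decide (G.Adj 0 1)) (decide (G.Adj 0 2)) (decide (G.Adj 0 3))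
      (decide (G.Adj 0 4)) (decide (G.Adj 1 2)) (decide (G.Adj 1 3)) (decide (G.Adj 1 4))
      (decide (G.Adj 2 3)) (decide (G.Adj 2 4)) (decide (G.Adj 3 4)) i j
      = decide (G.Adj i j) := by
    intro i j
    fin_cases i <;> fin_cases j <;>
      first
      | (simp [adjCode]; done)
      | (simp only [adjCode]; exact decide_eq_decide.2 (G.adj_comm _ _))
  have hdeg : ∀ v, G.degree v = ∑ w, (decide (G.Adj v w)).toNat := by
    intro v
    rw [← G.card_neighborFinset_eq_degree, G.neighborFinset_eq_filter, Finset.card_filter]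
    refine Finset.sum_congr rfl fun w _ => ?_
    by_cases hw : G.Adj v w <;> simp [hw]
  have key := adjCode_key (decide (G.Adj 0 1)) (decide (G.Adj 0 2)) (decide (G.Adj 0 3))
      (decide (G.Adj 0 4)) (decide (G.Adj 1 2)) (decide (G.Adj 1 3)) (decide (G.Adj 1 4))
      (decide (G.Adj 2 3)) (decide (G.Adj 2 4)) (decide (G.Adj 3 4)) (by
    simp only [hdeg] at h
    rw [Finset.sum_congr rfl fun i _ => Finset.sum_congr rfl fun j _ =>
      congrArg Bool.toNat (hA i j).symm] at h
    simp only [Fin.sum_univ_five, adjCode, Bool.toNat_false] at h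
    omega)
  simpa only [hA, decide_eq_true_eq, decide_eq_false_iff_not] using key

/-- Four vertices with the right adjacencies give an induced copy. -/
theorem indContains_of {n : ℕ} {P : SimpleGraph (Fin 4)} {G : SimpleGraph (Fin n)}
    (a b c d : Fin n) (hab : a ≠ b) (hac : a ≠ c) (had : a ≠ d) (hbc : b ≠ c) (hbd : b ≠ d)
    (hcd : c ≠ d)
    (h01 : G.Adj a b ↔ P.Adj 0 1) (h02 : G.Adj a c ↔ P.Adj 0 2) (h03 : G.Adj a d ↔ P.Adj 0 3)
    (h12 : G.Adj b c ↔ P.Adj 1 2) (h13 : G.Adj b d ↔ P.Adj 1 3) (h23 : G.Adj c d ↔ P.Adj 2 3) :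
    IndContains P G := by
  refine ⟨⟨![a, b, c, d], ?_⟩, ?_⟩
  · intro i j hij
    fin_cases i <;> fin_cases j <;> simp_all
  · intro i j
    fin_cases i <;> fin_cases j <;>
      first
      | exact iff_of_false (G.irrefl) (P.irrefl)
      | assumption
      | (rw [G.adj_comm, P.adj_comm]; assumption)

/-- The family `𝓕(Paw, Claw)` of graphs that are simultaneously induced Paw-free and
induced Claw-free is not feasible, and likewise `𝓕(P_3 ∪ K_1, K_3 ∪ K_1)` is not feasible. -/
theorem not_feasible_pawClaw_and_not_feasible_p3k1_k3k1 :
    ¬ Feasible (fun _ H => ¬ IndContains pawGraph H ∧ ¬ IndContains clawGraph H) ∧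
    ¬ Feasible (fun _ H => ¬ IndContains p3k1Graph H ∧ ¬ IndContains k3k1Graph H) := by
  classical
  have hsum : ∀ G : SimpleGraph (Fin 5), ∑ v, G.degree v = 2 * G.edgeSet.ncard := by
    intro G
    rw [G.sum_degrees_eq_twice_card_edges, ← SimpleGraph.coe_edgeFinset, Set.ncard_coe_finset]
  constructor
  · intro hF
    obtain ⟨G, ⟨hp, hc⟩, hm⟩ := hF 5 7 (by norm_num) (by norm_num)
    have hG := hsum G
    rw [hm] at hG
    obtain ⟨a, b, c, d, hac, hda, hdb, hdc, h1, h2, h3, h4, h5⟩ := exists_cherry Gᶜ (by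
      have hd : ∀ v, Gᶜ.degree v + G.degree v = 4 := by
        intro v
        have h1 := G.degree_compl v
        have h2 := G.degree_lt_card_verts v
        simp only [Fintype.card_fin] at h1 h2
        omega
      have : ∑ v, (Gᶜ.degree v + G.degree v) = 20 := by simp [hd]
      rw [Finset.sum_add_distrib] at this
      omega)
    simp only [SimpleGraph.compl_adj, not_and, not_not] at h1 h2 h3 h4 h5
    have h3 := h3 hda
    have h4 := h4 hdb
    have h5 := h5 hdc
    by_cases hh : G.Adj a c
    · refine hp (indContains_of a c d b hac hda.symm h1.1 hdc.symm h2.1.symm hdb ?_ ?_ ?_ ?_ ?_ ?_)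
        <;> simp [pawGraph, hh, h1.2, h4, h3.symm, h5.symm, G.adj_comm c b, h2.2]
    · refine hc (indContains_of d a b c hda hdb hdc h1.1 hac h2.1 ?_ ?_ ?_ ?_ ?_ ?_)
        <;> simp [clawGraph, hh, h1.2, h4, h3, h5, h2.2]
  · intro hF
    obtain ⟨G, ⟨hp, hk⟩, hm⟩ := hF 5 3 (by norm_num) (by norm_num)
    have hG := hsum G
    rw [hm] at hG
    obtain ⟨a, b, c, d, hac, hda, hdb, hdc, h1, h2, h3, h4, h5⟩ := exists_cherry G hG
    rw [G.adj_comm] at h3 h4 h5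
    by_cases hh : G.Adj a c
    · refine hk (indContains_of a b c d h1.ne hac hda.symm h2.ne hdb.symm hdc.symm ?_ ?_ ?_ ?_ ?_ ?_)
        <;> simp [k3k1Graph, hh, h1, h2, h3, h4, h5]
    · refine hp (indContains_of a b c d h1.ne hac hda.symm h2.ne hdb.symm hdc.symm ?_ ?_ ?_ ?_ ?_ ?_)
        <;> simp [p3k1Graph, hh, h1, h2, h3, h4, h5]
end

section
/- For every integer n ≥ 5 and every integer m with ⌊n/2⌋ + 1 ≤ m ≤ n − 2, every finite simple graph on n vertices with exactly m edges contains an induced copy of P_3 ∪ K_1 or an induced copy of K_3 ∪ K_1; that is, the pair (n,m) is not feasible for the family 𝓕(P_3 ∪ K_1, K_3 ∪ K_1). -/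
open SimpleGraph

theorem free_aux {V : Type} (H : SimpleGraph V) (a b c v : V) (hab : H.Adj a b)
    (hbc : H.Adj b c) (hac : a ≠ c) (hva : v ≠ a) (hvb : v ≠ b) (hvc : v ≠ c)
    (ha : ¬ H.Adj a v) (hb : ¬ H.Adj b v) (hc : ¬ H.Adj c v) :
    IndContains p3k1Graph H ∨ IndContains k3k1Graph H := by
  have hab' := hab.ne
  have hbc' := hbc.ne
  have ha2 : ¬ H.Adj v a := fun h => ha h.symm
  have hb2 : ¬ H.Adj v b := fun h => hb h.symm
  have hc2 : ¬ H.Adj v c := fun h => hc h.symm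
  have inj : Function.Injective ![a, b, c, v] := by
    intro i j h
    fin_cases i <;> fin_cases j <;> simp_all
  by_cases h : H.Adj a c
  · right
    refine ⟨⟨![a, b, c, v], inj⟩, ?_⟩
    intro i j
    fin_cases i <;> fin_cases j <;>
      simp [k3k1Graph, hab, hab.symm, hbc, hbc.symm, h, h.symm, ha, hb, hc, ha2, hb2, hc2]
  · left
    have h2 : ¬ H.Adj c a := fun h' => h h'.symm
    refine ⟨⟨![a, b, c, v], inj⟩, ?_⟩
    intro i j
    fin_cases i <;> fin_cases j <;>
      simp [p3k1Graph, hab, hab.symm, hbc, hbc.symm, h, h2, ha, hb, hc, ha2, hb2, hc2]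

theorem main_aux (n m : ℕ) (hn : 5 ≤ n) (hm1 : n / 2 + 1 ≤ m)
    (hm2 : m ≤ n - 2) (V : Type) [Fintype V] (hV : Fintype.card V = n) (H : SimpleGraph V)
    (hH : H.edgeSet.ncard = m) : IndContains p3k1Graph H ∨ IndContains k3k1Graph H := by
  classical
  have hne : Nonempty V := Fintype.card_pos_iff.mp (by omega)
  have hE : H.edgeFinset.card = m := by
    rw [← hH, ← SimpleGraph.coe_edgeFinset, Set.ncard_coe_finset]
  obtain ⟨b, hb⟩ : ∃ b, 1 < H.degree b := by
    by_contra! hcon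
    have h1 := H.sum_degrees_eq_twice_card_edges
    have h2 : ∑ v, H.degree v ≤ ∑ _v : V, 1 := Finset.sum_le_sum fun v _ => hcon v
    simp at h2
    omega
  rw [← SimpleGraph.card_neighborFinset_eq_degree, Finset.one_lt_card] at hb
  obtain ⟨a, ha, c, hc, hac⟩ := hb
  rw [SimpleGraph.mem_neighborFinset] at ha hc
  obtain ⟨v, hv⟩ : ∃ v, ¬ H.Reachable b v := by
    by_contra! hcon
    have hconn : H.Connected := ⟨fun x y => (hcon x).symm.trans (hcon y)⟩
    have h3 := hconn.card_vert_le_card_edgeSet_add_one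
    rw [Nat.card_eq_fintype_card, hV, Nat.card_coe_set_eq, hH] at h3
    omega
  have ra := ha.reachable
  have rc := hc.reachable
  refine free_aux H a b c v ha.symm hc hac ?_ ?_ ?_ ?_ ?_ ?_
  · rintro rfl; exact hv ra
  · rintro rfl; exact hv (SimpleGraph.Reachable.refl _)
  · rintro rfl; exact hv rc
  · intro h; exact hv (ra.trans h.reachable)
  · intro h; exact hv h.reachable
  · intro h; exact hv (rc.trans h.reachable)

/-- For `n ≥ 5` and `⌊n/2⌋ + 1 ≤ m ≤ n - 2`, every graph on `n` vertices with exactly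
`m` edges contains an induced `P_3 ∪ K_1` or an induced `K_3 ∪ K_1`; that is, the pair
`(n, m)` is not feasible for the family `𝓕(P_3 ∪ K_1, K_3 ∪ K_1)`. -/
theorem forces_p3k1_or_k3k1 (n m : ℕ) (hn : 5 ≤ n) (hm1 : n / 2 + 1 ≤ m)
    (hm2 : m ≤ n - 2) :
    (∀ (V : Type) [Fintype V], Fintype.card V = n → ∀ H : SimpleGraph V,
      H.edgeSet.ncard = m → IndContains p3k1Graph H ∨ IndContains k3k1Graph H) ∧
    ¬ FeasiblePair (fun _ H => ¬ IndContains p3k1Graph H ∧ ¬ IndContains k3k1Graph H) n m := by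
  refine ⟨fun V _ hV H hH => main_aux n m hn hm1 hm2 V hV H hH, ?_⟩
  rintro ⟨G, ⟨h1, h2⟩, hG⟩
  exact (main_aux n m hn hm1 hm2 (Fin n) (Fintype.card_fin n) G hG).elim h1 h2
end

section
/- For every integer n ≥ 5 and every integer m with ⌊n/2⌋ + 1 ≤ m ≤ n − 2, every finite simple graph on n vertices with exactly n(n−1)/2 − m edges contains an induced copy of the Paw or an induced copy of the Claw; that is, the pair (n, n(n−1)/2 − m) is not feasible for the family 𝓕(Paw, Claw). -/
open SimpleGraph

theorem aux_paw_or_claw (n m : ℕ) (hn : 5 ≤ n) (hm1 : n / 2 + 1 ≤ m)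
    (hm2 : m ≤ n - 2) (V : Type) [Fintype V] (hV : Fintype.card V = n) (H : SimpleGraph V)
    (hH : H.edgeSet.ncard = n * (n - 1) / 2 - m) :
    IndContains pawGraph H ∨ IndContains clawGraph H := by
  classical
  have hle : m ≤ n * (n - 1) / 2 := by
    have : 2 * (n - 1) ≤ n * (n - 1) := Nat.mul_le_mul_right _ (by omega)
    omega
  have hC : Hᶜ.edgeFinset.card = m := by
    have h1 : H.edgeFinset.card = n * (n - 1) / 2 - m := by
      rw [← hH, ← coe_edgeFinset, Set.ncard_coe_finset]
    have h2 : H.edgeFinset.card + Hᶜ.edgeFinset.card = n * (n - 1) / 2 := by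
      rw [← Nat.choose_two_right, ← hV, ← card_edgeFinset_top_eq_card_choose_two,
        ← Finset.card_union_of_disjoint]
      · congr 1
        ext e
        induction e with
        | _ x y =>
          simp only [Finset.mem_union, mem_edgeFinset, mem_edgeSet, compl_adj, top_adj]
          have := fun h : H.Adj x y => h.ne
          tauto
      · rw [Finset.disjoint_left]
        intro e
        induction e with
        | _ x y =>
          simp only [mem_edgeFinset, mem_edgeSet, compl_adj]
          tauto
    omega
  have hdeg : ∃ v, 2 ≤ Hᶜ.degree v := by
    by_contra! hcon
    have h := Hᶜ.sum_degrees_eq_twice_card_edges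
    have h2 : ∑ v, Hᶜ.degree v ≤ ∑ v : V, 1 :=
      Finset.sum_le_sum fun v _ => by have := hcon v; omega
    simp only [Finset.sum_const, Finset.card_univ, smul_eq_mul, mul_one] at h2
    omega
  obtain ⟨v, hv⟩ := hdeg
  obtain ⟨a, ha, b, hb, hab⟩ := Finset.one_lt_card.mp (show 1 < (Hᶜ.neighborFinset v).card from hv)
  rw [mem_neighborFinset] at ha hb
  have hw : ∃ w, ¬ Hᶜ.Reachable v w := by
    by_contra! hcon
    have hconn : Hᶜ.Connected :=
      { preconnected := fun x y => (hcon x).symm.trans (hcon y), nonempty := ⟨v⟩ }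
    have := hconn.card_vert_le_card_edgeSet_add_one
    rw [Nat.card_eq_fintype_card, Nat.card_eq_fintype_card, ← edgeFinset_card] at this
    omega
  obtain ⟨w, hw⟩ := hw
  have key : ∀ x, Hᶜ.Reachable v x → H.Adj x w := by
    intro x hx
    by_contra hn
    by_cases hxw : x = w
    · exact hw (hxw ▸ hx)
    · exact hw (hx.trans (Adj.reachable (by rw [compl_adj]; exact ⟨hxw, hn⟩)))
  have kv := key v (Reachable.refl v)
  have ka := key a ha.reachable
  have kb := key b hb.reachable
  rw [compl_adj] at ha hb
  obtain ⟨hva, ha⟩ := ha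
  obtain ⟨hvb, hb⟩ := hb
  have nv := kv.ne
  have na := ka.ne
  have nb := kb.ne
  have kv' := kv.symm
  have ka' := ka.symm
  have kb' := kb.symm
  have ha' : ¬ H.Adj a v := fun h => ha h.symm
  have hb' : ¬ H.Adj b v := fun h => hb h.symm
  by_cases h : H.Adj a b
  · left
    have h' := h.symm
    refine ⟨⟨![a, b, w, v], ?_⟩, ?_⟩
    · intro i j
      fin_cases i <;> fin_cases j <;> simp [*, Ne.symm, hva.symm, hvb.symm, nv.symm, na.symm, nb.symm, hab.symm]
    · intro i j
      change H.Adj (![a, b, w, v] i) (![a, b, w, v] j) ↔ _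
      fin_cases i <;> fin_cases j <;> simp [pawGraph, *]
  · right
    have h' : ¬ H.Adj b a := fun g => h g.symm
    refine ⟨⟨![w, v, a, b], ?_⟩, ?_⟩
    · intro i j
      fin_cases i <;> fin_cases j <;> simp [*, hva.symm, hvb.symm, nv.symm, na.symm, nb.symm, hab.symm]
    · intro i j
      change H.Adj (![w, v, a, b] i) (![w, v, a, b] j) ↔ _
      fin_cases i <;> fin_cases j <;> simp [clawGraph, *]

/-- For `n ≥ 5` and `⌊n/2⌋ + 1 ≤ m ≤ n - 2`, every graph on `n` vertices with exactly
`n(n-1)/2 - m` edges contains an induced Paw or an induced Claw; that is, the pair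
`(n, n(n-1)/2 - m)` is not feasible for the family `𝓕(Paw, Claw)`. -/
theorem forces_paw_or_claw (n m : ℕ) (hn : 5 ≤ n) (hm1 : n / 2 + 1 ≤ m)
    (hm2 : m ≤ n - 2) :
    (∀ (V : Type) [Fintype V], Fintype.card V = n → ∀ H : SimpleGraph V,
      H.edgeSet.ncard = n * (n - 1) / 2 - m →
        IndContains pawGraph H ∨ IndContains clawGraph H) ∧
    ¬ FeasiblePair (fun _ H => ¬ IndContains pawGraph H ∧ ¬ IndContains clawGraph H) n
        (n * (n - 1) / 2 - m) := by
  refine ⟨fun V _ hV H hH => aux_paw_or_claw n m hn hm1 hm2 V hV H hH, ?_⟩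
  rintro ⟨G, ⟨h1, h2⟩, hG⟩
  exact (aux_paw_or_claw n m hn hm1 hm2 (Fin n) (by simp) G hG).elim h1 h2
end

section
/- Let k ≥ 3 and n ≥ k be integers and set t = ⌊(n − k + 2)/2⌋. Then for every integer m with n(n−1)/2 − t ≤ m ≤ n(n−1)/2 − 1, every finite simple graph on n vertices with exactly m edges contains an induced copy of K_k ∖ K_2; that is, all such pairs (n,m) are not feasible for the family 𝓕(K_k ∖ K_2). -/
open SimpleGraph

/-- `K_k` with one edge removed (the edge between the vertices `0` and `1`). -/
def KminusEdge (k : ℕ) : SimpleGraph (Fin k) :=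
  SimpleGraph.fromRel (fun a b => ¬ ((a.val = 0 ∧ b.val = 1) ∨ (a.val = 1 ∧ b.val = 0)))

theorem indContains_aux (k n m : ℕ) (hk : 3 ≤ k) (hn : k ≤ n)
    (hm1 : n * (n - 1) / 2 - (n - k + 2) / 2 ≤ m) (hm2 : m ≤ n * (n - 1) / 2 - 1)
    (V : Type) [Fintype V] (hV : Fintype.card V = n) (H : SimpleGraph V)
    (hH : H.edgeSet.ncard = m) : IndContains (KminusEdge k) H := by
  classical
  rw [← Nat.choose_two_right] at hm1 hm2
  have hpos : 0 < n.choose 2 := Nat.choose_pos (by omega)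
  have hHe : H.edgeFinset.card = m := by
    rw [← hH, ← Set.ncard_coe_finset, SimpleGraph.coe_edgeFinset]
  have hsum : H.edgeFinset.card + Hᶜ.edgeFinset.card = n.choose 2 := by
    rw [← hV, ← SimpleGraph.card_edgeFinset_top_eq_card_choose_two,
      ← Finset.card_union_of_disjoint
        (SimpleGraph.disjoint_edgeFinset.2 disjoint_compl_right),
      ← SimpleGraph.edgeFinset_sup]
    congr 1
    ext e
    rw [SimpleGraph.mem_edgeFinset, SimpleGraph.mem_edgeFinset, sup_compl_eq_top]
  obtain ⟨e, he⟩ : Hᶜ.edgeFinset.Nonempty := by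
    rw [← Finset.card_pos]; omega
  induction e using Sym2.ind with
  | _ u v =>
  rw [SimpleGraph.mem_edgeFinset, SimpleGraph.mem_edgeSet] at he
  let S : Finset V := Finset.univ.filter fun x => ∃ w, Hᶜ.Adj x w
  have hS : S.card ≤ 2 * Hᶜ.edgeFinset.card := by
    rw [← SimpleGraph.sum_degrees_eq_twice_card_edges, Finset.card_eq_sum_ones]
    refine le_trans (Finset.sum_le_sum (g := fun x => Hᶜ.degree x) ?_)
      (Finset.sum_le_sum_of_subset (Finset.subset_univ S))
    intro x hx
    exact (SimpleGraph.degree_pos_iff_exists_adj _ _).2 (Finset.mem_filter.1 hx).2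
  have hT : k - 2 ≤ Sᶜ.card := by
    rw [Finset.card_compl, hV]; omega
  obtain ⟨T, hTS, hTc⟩ := Finset.exists_subset_card_eq hT
  let g := (T.equivFinOfCardEq hTc).symm
  have hg : ∀ i w, ((g i : V)) ≠ w → H.Adj (g i) w := by
    intro i w hw
    have h1 : (g i : V) ∉ S := Finset.mem_compl.1 (hTS (g i).2)
    by_contra h
    exact h1 (Finset.mem_filter.2 ⟨Finset.mem_univ _, w, (SimpleGraph.compl_adj _ _ _).2 ⟨hw, h⟩⟩)
  have hgu : ∀ i, (g i : V) ≠ u := by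
    intro i h
    exact Finset.mem_compl.1 (hTS (g i).2) (Finset.mem_filter.2 ⟨Finset.mem_univ _, v, h ▸ he⟩)
  have hgv : ∀ i, (g i : V) ≠ v := by
    intro i h
    exact Finset.mem_compl.1 (hTS (g i).2)
      (Finset.mem_filter.2 ⟨Finset.mem_univ _, u, h ▸ he.symm⟩)
  have huv : u ≠ v := he.ne
  have hnadj : ¬ H.Adj u v := ((SimpleGraph.compl_adj _ _ _).1 he).2
  have hginj : ∀ i j, (g i : V) = g j → i = j := fun i j h => g.injective (Subtype.ext h)
  let f : Fin k → V := fun i =>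
    if h0 : i.val = 0 then u else if h1 : i.val = 1 then v else g ⟨i.val - 2, by omega⟩
  have hf : Function.Injective f := by
    intro a b hab
    simp only [f] at hab
    split_ifs at hab <;> first
      | (apply Fin.ext; omega)
      | exact absurd hab huv
      | exact absurd hab.symm huv
      | exact absurd hab (hgu _)
      | exact absurd hab.symm (hgu _)
      | exact absurd hab (hgv _)
      | exact absurd hab.symm (hgv _)
      | (have := Fin.mk.inj (hginj _ _ hab); apply Fin.ext; omega)
  refine ⟨⟨f, hf⟩, fun a b => ?_⟩
  have key : ∀ a b : Fin k, a ≠ b → 2 ≤ a.val → H.Adj (f a) (f b) := by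
    intro a b hab ha
    have hne := hf.ne hab
    have hfa : f a = g ⟨a.val - 2, by omega⟩ := by
      simp only [f]
      rw [dif_neg (by omega), dif_neg (by omega)]
    rw [hfa] at hne ⊢
    exact hg _ _ hne
  simp only [KminusEdge, SimpleGraph.fromRel_adj, Function.Embedding.coeFn_mk]
  by_cases hab : a = b
  · subst hab; simp
  by_cases ha : 2 ≤ a.val
  · refine iff_of_true (key a b hab ha) ⟨hab, Or.inl (by omega)⟩
  by_cases hb : 2 ≤ b.val
  · refine iff_of_true (key b a (Ne.symm hab) hb).symm ⟨hab, Or.inl (by omega)⟩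
  have hab' : a.val ≠ b.val := fun h => hab (Fin.ext h)
  refine iff_of_false ?_ (by rintro ⟨_, h⟩; omega)
  have h01 : (a.val = 0 ∧ b.val = 1) ∨ (a.val = 1 ∧ b.val = 0) := by omega
  rcases h01 with ⟨h, h'⟩ | ⟨h, h'⟩
  · simpa [f, h, h'] using hnadj
  · simpa [f, h, h'] using fun q : H.Adj v u => hnadj q.symm

/-- Let `k ≥ 3`, `n ≥ k` and `t = ⌊(n - k + 2)/2⌋`.  For every `m` with
`n(n-1)/2 - t ≤ m ≤ n(n-1)/2 - 1`, every graph on `n` vertices with exactly `m` edges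
contains an induced `K_k ∖ K_2`; that is, all such pairs `(n, m)` are not feasible
for the family `𝓕(K_k ∖ K_2)`. -/
theorem forces_KkMinusEdge (k n m : ℕ) (hk : 3 ≤ k) (hn : k ≤ n)
    (hm1 : n * (n - 1) / 2 - (n - k + 2) / 2 ≤ m) (hm2 : m ≤ n * (n - 1) / 2 - 1) :
    (∀ (V : Type) [Fintype V], Fintype.card V = n → ∀ H : SimpleGraph V,
      H.edgeSet.ncard = m → IndContains (KminusEdge k) H) ∧
    ¬ FeasiblePair (IndFreeFamily (KminusEdge k)) n m := by
  refine ⟨fun V _ hV H hH => indContains_aux k n m hk hn hm1 hm2 V hV H hH, ?_⟩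
  rintro ⟨G, hG, hGm⟩
  exact hG (indContains_aux k n m hk hn hm1 hm2 (Fin n) (Fintype.card_fin n) G hGm)
end
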